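/- arXiv:2101.07466 — 3 statements merged into one kernel-verified Lean document; each statement's English description precedes it below -/
import Mathlib

section
/- Schoenberg's characterization used for kernel construction: let A be a nonempty set and γ : A × A → ℝ a symmetric function. Then γ is a negative definite kernel if and only if for every λ > 0 the function (a, a′) ↦ exp(−γ(a, a′)/λ) is a positive definite kernel on A. -/
/-!
Fix a base point `o`. Testing negative definiteness of `γ` on the points `o, a₁, …, aₙ` with the
coefficients `-∑ cᵢ, c₁, …, cₙ` shows that
`φ(a, b) = γ(a, o) + γ(b, o) - γ(a, b) - γ(o, o)` is positive definite. By the Schur product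
theorem the powers of `φ / l` are positive definite, hence so is `exp (φ / l)`, a pointwise limit
of nonnegative combinations of them. Finally `exp (-γ(a, b) / l) = f(a) f(b) exp (φ(a, b) / l)`
for a suitable `f`, and such a rescaling preserves positive definiteness.

Conversely, if `∑ cᵢ = 0`, the function `t ↦ ∑ᵢⱼ cᵢ cⱼ exp (-t γ(aᵢ, aⱼ))` vanishes at `0` and is
nonnegative for `t > 0`, so its derivative at `0`, which is `-∑ᵢⱼ cᵢ cⱼ γ(aᵢ, aⱼ)`, is nonnegative.
-/

open scoped BigOperators

/-- A symmetric function `γ : A × A → ℝ` is a negative definite kernel if for all finite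
families of points and real coefficients summing to zero, the quadratic form is `≤ 0`. -/
def IsNegDefKernel {A : Type*} (γ : A → A → ℝ) : Prop :=
  (∀ a b, γ a b = γ b a) ∧
    ∀ (n : ℕ) (a : Fin n → A) (c : Fin n → ℝ), (∑ i, c i) = 0 →
      ∑ i, ∑ j, c i * c j * γ (a i) (a j) ≤ 0

/-- A symmetric function `γ : A × A → ℝ` is a positive definite kernel if for all finite
families of points and real coefficients, the quadratic form is `≥ 0`. -/
def IsPosDefKernel {A : Type*} (γ : A → A → ℝ) : Prop :=
  (∀ a b, γ a b = γ b a) ∧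
    ∀ (n : ℕ) (a : Fin n → A) (c : Fin n → ℝ),
      0 ≤ ∑ i, ∑ j, c i * c j * γ (a i) (a j)

open Filter Topology

/-- A kernel is positive definite iff all its Gram matrices are positive semidefinite. -/
lemma isPosDefKernel_iff_posSemidef {A : Type*} (K : A → A → ℝ) :
    IsPosDefKernel K ↔ (∀ a b, K a b = K b a) ∧
      ∀ (n : ℕ) (a : Fin n → A), (Matrix.of fun i j => K (a i) (a j)).PosSemidef := by
  have key : ∀ (n : ℕ) (a : Fin n → A) (c : Fin n → ℝ),
      star c ⬝ᵥ ((Matrix.of fun i j => K (a i) (a j)).mulVec c)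
        = ∑ i, ∑ j, c i * c j * K (a i) (a j) := by
    intro n a c
    simp only [dotProduct, Matrix.mulVec, Finset.mul_sum, Matrix.of_apply, star_trivial]
    exact Finset.sum_congr rfl fun i _ => Finset.sum_congr rfl fun j _ => by ring
  refine and_congr_right fun hs => forall_congr' fun n => forall_congr' fun a => ?_
  rw [Matrix.posSemidef_iff_dotProduct_mulVec]
  refine ⟨fun h => ⟨?_, fun c => (key n a c).symm ▸ h c⟩, fun h c => key n a c ▸ h.2 c⟩
  ext i j
  simp [hs (a i) (a j)]

lemma IsPosDefKernel.mul {A : Type*} {K L : A → A → ℝ} (hK : IsPosDefKernel K)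
    (hL : IsPosDefKernel L) : IsPosDefKernel (fun a b => K a b * L a b) := by
  rw [isPosDefKernel_iff_posSemidef] at *
  exact ⟨fun a b => by rw [hK.1 a b, hL.1 a b], fun n a => (hK.2 n a).hadamard (hL.2 n a)⟩

lemma isPosDefKernel_rankOne {A : Type*} (f : A → ℝ) :
    IsPosDefKernel (fun a b => f a * f b) := by
  refine ⟨fun a b => mul_comm _ _, fun n a c => ?_⟩
  have h : ∑ i, ∑ j, c i * c j * (f (a i) * f (a j))
      = (∑ i, c i * f (a i)) * ∑ j, c j * f (a j) := by
    rw [Finset.sum_mul_sum]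
    exact Finset.sum_congr rfl fun i _ => Finset.sum_congr rfl fun j _ => by ring
  rw [h]
  exact mul_self_nonneg _

lemma IsPosDefKernel.pow {A : Type*} {K : A → A → ℝ} (hK : IsPosDefKernel K) (k : ℕ) :
    IsPosDefKernel (fun a b => K a b ^ k) := by
  induction k with
  | zero => simpa using isPosDefKernel_rankOne (fun _ : A => (1 : ℝ))
  | succ k ih => simpa only [pow_succ] using ih.mul hK

lemma IsPosDefKernel.exp {A : Type*} {K : A → A → ℝ} (hK : IsPosDefKernel K) :
    IsPosDefKernel (fun a b => Real.exp (K a b)) := by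
  refine ⟨fun a b => by simp only [hK.1 a b], fun n a c => ?_⟩
  have hsum : HasSum (fun k : ℕ => ∑ i, ∑ j, c i * c j * (K (a i) (a j) ^ k / (k.factorial : ℝ)))
      (∑ i, ∑ j, c i * c j * Real.exp (K (a i) (a j))) := by
    refine hasSum_sum fun i _ => hasSum_sum fun j _ => HasSum.mul_left _ ?_
    rw [Real.exp_eq_exp_ℝ]
    exact NormedSpace.expSeries_div_hasSum_exp _
  refine hsum.nonneg fun k => ?_
  have h := div_nonneg ((hK.pow k).2 n a c) (Nat.cast_nonneg (α := ℝ) k.factorial)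
  simpa only [Finset.sum_div, mul_div_assoc] using h

/-- The kernel obtained from a negative definite kernel by centring at a base point `o` is positive
definite. -/
lemma IsNegDefKernel.isPosDefKernel_centred {A : Type*} {γ : A → A → ℝ} (hγ : IsNegDefKernel γ)
    (o : A) : IsPosDefKernel (fun a b => γ a o + γ b o - γ a b - γ o o) := by
  refine ⟨fun a b => by simp only [hγ.1 a b]; ring, fun n a c => ?_⟩
  have h := hγ.2 (n + 1) (Fin.cons o a) (Fin.cons (-∑ i, c i) c) (by simp [Fin.sum_univ_succ])
  simp only [Fin.sum_univ_succ, Fin.cons_zero, Fin.cons_succ, Finset.sum_add_distrib] at h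
  have h1 : ∑ i, (-∑ j, c j) * c i * γ o (a i) = (-∑ j, c j) * ∑ i, c i * γ (a i) o := by
    rw [Finset.mul_sum]
    exact Finset.sum_congr rfl fun i _ => by rw [hγ.1 o (a i)]; ring
  have h2 : ∑ i, c i * (-∑ j, c j) * γ (a i) o = (-∑ j, c j) * ∑ i, c i * γ (a i) o := by
    rw [Finset.mul_sum]
    exact Finset.sum_congr rfl fun i _ => by ring
  have h3 : ∑ i, ∑ j, c i * c j * (γ (a i) o + γ (a j) o - γ (a i) (a j) - γ o o)
      = (∑ i, c i * γ (a i) o) * (∑ j, c j) + (∑ j, c j) * (∑ i, c i * γ (a i) o)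
        - ∑ i, ∑ j, c i * c j * γ (a i) (a j) - (∑ j, c j) * (∑ j, c j) * γ o o := by
    rw [Finset.sum_mul_sum, Finset.sum_mul_sum, Finset.sum_mul_sum]
    simp only [Finset.sum_mul, ← Finset.sum_add_distrib,
      ← Finset.sum_sub_distrib]
    exact Finset.sum_congr rfl fun i _ => Finset.sum_congr rfl fun j _ => by ring
  rw [h1, h2] at h
  rw [h3]
  linarith

/-- Schoenberg's characterization: a symmetric `γ` is a negative definite kernel iff
for every `λ > 0` the kernel `exp(-γ/λ)` is positive definite. -/
theorem schoenberg_neg_def_iff_exp_pos_def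
    {A : Type*} [Nonempty A] (γ : A → A → ℝ) (hsym : ∀ a b, γ a b = γ b a) :
    IsNegDefKernel γ ↔
      ∀ l : ℝ, 0 < l → IsPosDefKernel (fun a a' => Real.exp (-(γ a a') / l)) := by
  constructor
  · intro hγ l _
    obtain ⟨o⟩ := ‹Nonempty A›
    have hl : IsPosDefKernel (fun a b => (γ a o + γ b o - γ a b - γ o o) / l) := by
      obtain ⟨h1, h2⟩ := hγ.isPosDefKernel_centred o
      refine ⟨fun a b => congrArg (· / l) (h1 a b), fun n a c => ?_⟩
      have h := div_nonneg (h2 n a c) (by positivity : 0 ≤ l)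
      simpa only [Finset.sum_div, mul_div_assoc] using h
    convert hl.exp.mul
      (isPosDefKernel_rankOne fun a => Real.exp (γ o o / 2 / l - γ a o / l)) using 3 with a b
    rw [← Real.exp_add, ← Real.exp_add]
    congr 1
    ring
  · refine fun h => ⟨hsym, fun n a c hc => ?_⟩
    have hd : HasDerivAt (fun t : ℝ => ∑ i, ∑ j, c i * c j * Real.exp (t * -γ (a i) (a j)))
        (∑ i, ∑ j, c i * c j * -γ (a i) (a j)) 0 := by
      refine HasDerivAt.fun_sum fun i _ => HasDerivAt.fun_sum fun j _ => HasDerivAt.const_mul _ ?_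
      simpa using ((hasDerivAt_id (0 : ℝ)).mul_const (-γ (a i) (a j))).exp
    have h0 : ∑ i, ∑ j, c i * c j = 0 := by
      rw [← Finset.sum_mul_sum, hc, zero_mul]
    have hnn : 0 ≤ ∑ i, ∑ j, c i * c j * -γ (a i) (a j) := by
      refine ge_of_tendsto hd.tendsto_slope_zero_right ?_
      filter_upwards [self_mem_nhdsWithin] with t ht
      have ht : 0 < t := ht
      have hp := (h t⁻¹ (inv_pos.mpr ht)).2 n a c
      simp only [div_inv_eq_mul, mul_comm _ t] at hp
      simp only [zero_add, zero_mul, Real.exp_zero, mul_one, h0, sub_zero, smul_eq_mul]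
      exact mul_nonneg (inv_pos.mpr ht).le hp
    simpa using hnn
end

section
/- (Theorem B.2, real-parameter case) For real numbers α and β with 1 ≤ α < ∞, 1/2 ≤ β ≤ α, and α ≠ β, define d_{α|β} : ℝ≥0 × ℝ≥0 → ℝ by d_{α|β}(x, y) = ( (αβ/(α−β)) · [ ((x^α + y^α)/2)^{1/α} − ((x^β + y^β)/2)^{1/β} ] )^{1/2}. Then (a) d_{α|β} is 1/2-homogeneous on ℝ≥0, i.e., d_{α|β}(c·x, c·y) = c^{1/2}·d_{α|β}(x, y) for all c ≥ 0, and (b) the function (x, y) ↦ d_{α|β}(x, y)² is a negative definite kernel on ℝ≥0. -/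
/-!
Write `M_α(x, y) = ((x ^ α + y ^ α) / 2) ^ (1 / α)`. Since the coefficients sum to zero, terms that
depend on one variable only do not matter, and with `x = e ^ s`, `y = e ^ t`
one has (`pm_exp`)
`M_α(e ^ s, e ^ t) = 2 ^ (-1/α) (e ^ s + e ^ t) - e ^ (s/2) e ^ (t/2) phi α (s - t)`.
The claim is therefore that `phi α - phi β` is a positive definite function on `ℝ`, which follows from
`0 ≤ 𝓕 (phi α) - 𝓕 (phi β)` by Fourier inversion (`phi_form_mono`).

The function `phi α` is even, smooth and, for `α > 1/2`, exponentially decaying together with its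
derivative, and it solves `phi'' = phi / 4 - W` with `W α s` a multiple of
`(2 cosh (α s / 2)) ^ (1/α - 2)`. The Fourier transform of a power of `cosh` is a Beta integral
(`integral_cosh_cpow`), so that, with `a = 1/α` and `w = 2 π v`,
`𝓕 (phi α) v = 2 ^ (-a) |Γ(1 - a/2 + i a w)|² (1 - a) / Γ(2 - a) / (w² + 1/4)`.
This is nonnegative for `a ≤ 1`, nonpositive for `1 ≤ a < 2`, and antitone in `a ∈ (0, 1)`: by Euler's
limit formula the Gamma quotient is a limit of positive multiples, not depending on `a`, of
`∏_m (m - a) / ((m - a/2)² + a² w²)`, and each factor is antitone in `a`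
(`gammaRatio_antitone`). This gives `density_mono`. The endpoint `β = 1/2` and
the points with a zero coordinate follow by continuity.
-/

open scoped BigOperators NNReal

open Real Filter Topology MeasureTheory FourierTransform

namespace PowerMean

/-! ### Monotonicity of the Gamma quotient -/

/-- The quotient `|Γ(1 - a/2 + i a w)|² (1 - a) / Γ(2 - a)`, which is `|Γ(1 - a/2 + i a w)|² / Γ(1 - a)`
written so that it is meaningful at `a = 1` (with value `0`) and has the right sign on `(1, 2)`. -/
noncomputable def gammaRatio (a w : ℝ) : ℝ :=
  ‖Complex.Gamma (1 - a / 2 + a * w * Complex.I)‖ ^ 2 / Gamma (2 - a) * (1 - a)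

lemma gammaRatio_eq {a : ℝ} (ha1 : a < 1) (w : ℝ) :
    gammaRatio a w = ‖Complex.Gamma (1 - a / 2 + a * w * Complex.I)‖ ^ 2 / Gamma (1 - a) := by
  have h : Gamma (2 - a) = (1 - a) * Gamma (1 - a) := by
    rw [← Real.Gamma_add_one (by linarith)]; ring_nf
  have h1 : Gamma (1 - a) ≠ 0 := (Real.Gamma_pos_of_pos (by linarith)).ne'
  have h2 : (1 - a) ≠ 0 := by linarith
  rw [gammaRatio, h]; field_simp

/-- The approximants of the Gamma quotient from Euler's limit formula: the powers of `n` cancel up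
to a factor that does not depend on `a`. -/
lemma gammaSeq_ratio {a : ℝ} (ha1 : a < 1) (w : ℝ) {n : ℕ} (hn : 0 < n) :
    ‖Complex.GammaSeq (1 - a / 2 + a * w * Complex.I) n‖ ^ 2 / GammaSeq (1 - a) n =
      n * (n.factorial : ℝ) * ∏ j ∈ Finset.range (n + 1),
        ((j + 1 : ℝ) - a) / (((j + 1 : ℝ) - a / 2) ^ 2 + a ^ 2 * w ^ 2) := by
  have hn' : (0 : ℝ) < n := by exact_mod_cast hn
  have h1 : ∀ j : ℕ, ‖(1 - a / 2 + a * w * Complex.I + j : ℂ)‖ ^ 2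
      = ((j + 1 : ℝ) - a / 2) ^ 2 + a ^ 2 * w ^ 2 := by
    intro j
    rw [← Complex.normSq_eq_norm_sq, Complex.normSq_apply]
    simp
    ring
  have h2 : ‖(n : ℂ) ^ (1 - a / 2 + a * w * Complex.I : ℂ)‖ ^ 2 = (n : ℝ) ^ (1 - a) * n := by
    rw [Complex.norm_natCast_cpow_of_pos hn]
    have : (1 - a / 2 + a * w * Complex.I : ℂ).re = 1 - a / 2 := by simp
    rw [this, sq, ← Real.rpow_add hn', ← Real.rpow_add_one hn'.ne']
    ring_nf
  have h3 : (n : ℝ) ^ (1 - a) ≠ 0 := (Real.rpow_pos_of_pos hn' _).ne'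
  have h4 : ∏ j ∈ Finset.range (n + 1), (1 - a + j : ℝ) ≠ 0 :=
    Finset.prod_ne_zero_iff.mpr fun j _ => by
      have : (0 : ℝ) ≤ j := by positivity
      linarith
  have h5 : ∏ j ∈ Finset.range (n + 1), (((j + 1 : ℝ) - a / 2) ^ 2 + a ^ 2 * w ^ 2) ≠ 0 :=
    Finset.prod_ne_zero_iff.mpr fun j _ => by
      have : (0 : ℝ) ≤ j := by positivity
      have : 0 < (j + 1 : ℝ) - a / 2 := by linarith
      positivity
  have h6 : (n.factorial : ℝ) ≠ 0 := by positivity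
  rw [Complex.GammaSeq, Real.GammaSeq, norm_div, norm_mul, norm_prod, div_pow, mul_pow, h2,
    ← Finset.prod_pow, Finset.prod_congr rfl fun j _ => h1 j, Finset.prod_div_distrib]
  have h7 : ∏ j ∈ Finset.range (n + 1), ((j + 1 : ℝ) - a)
      = ∏ j ∈ Finset.range (n + 1), (1 - a + j : ℝ) :=
    Finset.prod_congr rfl fun j _ => by ring
  rw [h7]
  simp only [Complex.norm_natCast]
  generalize ∏ j ∈ Finset.range (n + 1), (((j + 1 : ℝ) - a / 2) ^ 2 + a ^ 2 * w ^ 2) = P at *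
  field_simp

lemma factor_antitone {a b m w : ℝ} (ha : 0 < a) (hab : a ≤ b) (hb : b < m) :
    (m - b) / ((m - b / 2) ^ 2 + b ^ 2 * w ^ 2) ≤ (m - a) / ((m - a / 2) ^ 2 + a ^ 2 * w ^ 2) := by
  have h1 : 0 < m - b / 2 := by linarith
  have h2 : 0 < m - a / 2 := by linarith
  rw [div_le_div_iff₀ (by positivity) (by positivity)]
  have h3 : (m - b) * a ^ 2 ≤ (m - a) * b ^ 2 := by
    apply mul_le_mul <;> nlinarith
  nlinarith [mul_le_mul_of_nonneg_left h3 (by positivity : 0 ≤ w ^ 2 + 1 / 4)]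

lemma gammaRatio_antitone {a b : ℝ} (ha : 0 < a) (hab : a ≤ b) (hb : b < 1) (w : ℝ) :
    gammaRatio b w ≤ gammaRatio a w := by
  have hT : ∀ c : ℝ, c < 1 → Tendsto (fun n : ℕ =>
      ‖Complex.GammaSeq (1 - c / 2 + c * w * Complex.I) n‖ ^ 2 / GammaSeq (1 - c) n) atTop
      (𝓝 (gammaRatio c w)) := by
    intro c hc
    rw [gammaRatio_eq hc]
    exact ((Complex.GammaSeq_tendsto_Gamma _).norm.pow 2).div (Real.GammaSeq_tendsto_Gamma _)
      (Real.Gamma_pos_of_pos (by linarith)).ne'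
  refine le_of_tendsto_of_tendsto (hT b hb) (hT a (by linarith)) ?_
  filter_upwards [eventually_gt_atTop 0] with n hn
  rw [gammaSeq_ratio hb w hn, gammaSeq_ratio (by linarith) w hn]
  refine mul_le_mul_of_nonneg_left (Finset.prod_le_prod ?_ ?_) (by positivity)
  · intro j _
    have : (0 : ℝ) ≤ j := by positivity
    exact div_nonneg (by linarith) (by positivity)
  · intro j _
    have : (0 : ℝ) ≤ j := by positivity
    exact factor_antitone ha hab (by linarith)

/-! ### Fourier transform of powers of `cosh` -/

/-- The Beta integral after the substitution `x = sigmoid s`. -/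
lemma integral_sigmoid (u v : ℂ) :
    Complex.betaIntegral u v = ∫ s : ℝ, (sigmoid s : ℂ) ^ u * (sigmoid (-s) : ℂ) ^ v := by
  rw [Complex.betaIntegral, intervalIntegral.integral_of_le zero_le_one,
    integral_Ioc_eq_integral_Ioo, ← range_sigmoid, ← Set.image_univ,
    integral_image_eq_integral_abs_deriv_smul MeasurableSet.univ
      (fun x _ => (hasDerivAt_sigmoid x).hasDerivWithinAt) sigmoid_injective.injOn,
    setIntegral_univ]
  refine integral_congr_ae (Eventually.of_forall fun s => ?_)
  have h0 := sigmoid_pos s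
  have h1 := sigmoid_pos (-s)
  have h2 : (1 - sigmoid s : ℂ) = (sigmoid (-s) : ℝ) := by rw [sigmoid_neg]; push_cast; rfl
  have h0' : (sigmoid s : ℂ) ≠ 0 := by exact_mod_cast h0.ne'
  have h1' : (sigmoid (-s) : ℂ) ≠ 0 := by exact_mod_cast h1.ne'
  simp only [h2]
  rw [← sigmoid_neg, abs_of_pos (mul_pos h0 h1), Complex.cpow_sub _ _ h0', Complex.cpow_sub _ _ h1',
    Complex.real_smul]
  push_cast
  rw [Complex.cpow_one, Complex.cpow_one]
  field_simp

/-- The Fourier transform of `(2 cosh (s/2)) ^ (-c)`: the Beta integral `B(c/2 + i w, c/2 - i w)`, in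
view of `sigmoid s * sigmoid (-s) = (2 cosh (s/2)) ^ (-2)` and
`sigmoid s / sigmoid (-s) = exp s`. -/
lemma integral_cosh_cpow {c : ℝ} (hc : 0 < c) (w : ℝ) :
    ∫ s : ℝ, (((2 * cosh (s / 2)) ^ (-c) : ℝ) : ℂ) * Complex.exp (s * w * Complex.I)
      = ((‖Complex.Gamma (c / 2 + w * Complex.I)‖ ^ 2 / Gamma c : ℝ) : ℂ) := by
  have hu : (c / 2 + w * Complex.I : ℂ).re = c / 2 := by simp
  have hv : (c / 2 - w * Complex.I : ℂ).re = c / 2 := by simp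
  have hB := Complex.betaIntegral_eq_Gamma_mul_div (c / 2 + w * Complex.I) (c / 2 - w * Complex.I)
    (by rw [hu]; positivity) (by rw [hv]; positivity)
  have hconj : Complex.Gamma (c / 2 - w * Complex.I)
      = (starRingEnd ℂ) (Complex.Gamma (c / 2 + w * Complex.I)) := by
    rw [← Complex.Gamma_conj]; simp [sub_eq_add_neg, Complex.conj_ofNat]
  have hsum : (c / 2 + w * Complex.I + (c / 2 - w * Complex.I) : ℂ) = (c : ℝ) := by
    ring_nf
  rw [hconj, Complex.mul_conj, hsum, Complex.Gamma_ofReal, Complex.normSq_eq_norm_sq,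
    integral_sigmoid] at hB
  push_cast at hB ⊢
  rw [← hB]
  refine integral_congr_ae (Eventually.of_forall fun s => ?_)
  have h0 := sigmoid_pos s
  have h1 := sigmoid_pos (-s)
  have h2 : 0 < 2 * cosh (s / 2) := by have := cosh_pos (s / 2); positivity
  -- Both complex powers become exponentials of `± s / 2 - log (2 cosh (s / 2))`.
  have key : ∀ t : ℝ, log (sigmoid t) = t / 2 - log (2 * cosh (t / 2)) := by
    intro t
    have h3 : 0 < 2 * cosh (t / 2) := by have := cosh_pos (t / 2); positivity
    have : sigmoid t = exp (t / 2) / (2 * cosh (t / 2)) := by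
      rw [sigmoid_def, cosh_eq, inv_eq_one_div, div_eq_div_iff (by positivity) (by positivity)]
      rw [mul_add, ← exp_add]; ring_nf
    rw [this, log_div (exp_pos _).ne' h3.ne', log_exp]
  have h0' : (sigmoid s : ℂ) ≠ 0 := by exact_mod_cast h0.ne'
  have h1' : (sigmoid (-s) : ℂ) ≠ 0 := by exact_mod_cast h1.ne'
  simp only
  rw [Complex.cpow_def_of_ne_zero h0', Complex.cpow_def_of_ne_zero h1', Real.rpow_def_of_pos h2,
    ← Complex.ofReal_log h0.le, ← Complex.ofReal_log h1.le, key, key, neg_div, cosh_neg,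
    Complex.ofReal_exp, ← Complex.exp_add, ← Complex.exp_add]
  congr 1
  push_cast
  ring

/-- The function `phi α / 4 - (phi α)''`, a multiple of a power of `cosh`; see `hasDerivAt_phi'`. -/
noncomputable def W (α s : ℝ) : ℝ :=
  2 ^ (-(1 / α)) * (α - 1) * (2 * cosh (α * s / 2)) ^ (1 / α - 2)

lemma fourier_W {α : ℝ} (hα : 1 / 2 < α) (v : ℝ) :
    𝓕 (fun s => (W α s : ℂ)) v = ((2 ^ (-(1 / α)) * gammaRatio (1 / α) (-2 * π * v) : ℝ) : ℂ) := by
  have hα0 : 0 < α := by linarith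
  have hc : 0 < 2 - 1 / α := by
    rw [sub_pos, div_lt_iff₀ hα0]; linarith
  have h := integral_cosh_cpow hc (1 / α * (-2 * π * v))
  rw [Real.fourier_real_eq_integral_exp_smul]
  set F : ℝ → ℂ := fun y => (((2 * cosh (y / 2)) ^ (-(2 - 1 / α)) : ℝ) : ℂ)
    * Complex.exp (y * (1 / α * (-2 * π * v) : ℝ) * Complex.I) with hF
  have e : ∀ s : ℝ, Complex.exp (((-2 * π * s * v : ℝ) : ℂ) * Complex.I) • (W α s : ℂ)
      = (2 ^ (-(1 / α)) * (α - 1) : ℝ) * F (α * s) := by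
    intro s
    have : ((α * s : ℝ) : ℂ) * (1 / α * (-2 * π * v) : ℝ) = (-2 * π * s * v : ℝ) := by
      rw [← Complex.ofReal_mul]; congr 1; field_simp
    simp only [W, hF, this, smul_eq_mul, neg_sub]
    push_cast
    ring
  simp_rw [e]
  rw [integral_const_mul, Measure.integral_comp_mul_left F α, h, gammaRatio]
  have h3 : ((2 - 1 / α : ℝ) : ℂ) / 2 + ((1 / α * (-2 * π * v) : ℝ) : ℂ) * Complex.I
    = 1 - ((1 / α : ℝ) : ℂ) / 2 + ((1 / α : ℝ) : ℂ) * ((-2 * π * v : ℝ) : ℂ) * Complex.I := by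
    push_cast; ring
  rw [h3, Complex.real_smul, ← Complex.ofReal_mul, ← Complex.ofReal_mul, abs_of_pos (by positivity)]
  congr 1
  field_simp


/-! ### The function `phi` and its differential equation -/

lemma integrable_of_exp_bound {f : ℝ → ℝ} (hf : Continuous f) {C r : ℝ} (hr : 0 < r)
    (h : ∀ s, |f s| ≤ C * exp (-r * |s|)) : Integrable f := by
  have hI : Integrable fun s : ℝ => C * (2 * (1 + (r * s) ^ 2)⁻¹) :=
    ((integrable_inv_one_add_sq.comp_mul_left' hr.ne').const_mul 2).const_mul C
  refine hI.mono' hf.aestronglyMeasurable (Eventually.of_forall fun s => ?_)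
  have hC : 0 ≤ C := by
    have := (abs_nonneg _).trans (h 0)
    simpa using this
  refine (h s).trans (mul_le_mul_of_nonneg_left ?_ hC)
  have h1 := quadratic_le_exp_of_nonneg (by positivity : 0 ≤ r * |s|)
  have h2 : (r * |s|) ^ 2 = (r * s) ^ 2 := by rw [mul_pow, sq_abs, mul_pow]
  rw [neg_mul, exp_neg, ← div_eq_mul_inv, inv_le_comm₀ (exp_pos _) (by positivity), inv_div]
  have : 0 ≤ r * |s| := by positivity
  nlinarith

/-- The function of `s - t` left over from the power mean of `exp s` and `exp t`, after
normalizing by `exp ((s + t) / 2)` and subtracting from the one-variable terms; see `pm_exp`. -/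
noncomputable def phi (α s : ℝ) : ℝ :=
  2 ^ (-(1 / α)) * (2 * cosh (s / 2) - (2 * cosh (α * s / 2)) ^ (1 / α))

/-- The derivative of `phi α` (for `α ≠ 0`). -/
noncomputable def phi' (α s : ℝ) : ℝ :=
  2 ^ (-(1 / α)) * (sinh (s / 2) - (2 * cosh (α * s / 2)) ^ (1 / α - 1) * sinh (α * s / 2))

lemma two_cosh_pos (x : ℝ) : 0 < 2 * cosh x := by have := cosh_pos x; positivity

lemma hasDerivAt_two_cosh (k s : ℝ) :
    HasDerivAt (fun s => 2 * cosh (k * s / 2)) (k * sinh (k * s / 2)) s := by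
  have h : HasDerivAt (fun s => k * s / 2) (k / 2) s := by
    simpa using ((hasDerivAt_id s).const_mul k).div_const 2
  exact (h.cosh.const_mul 2).congr_deriv (by ring)

lemma hasDerivAt_sinh' (k s : ℝ) :
    HasDerivAt (fun s => sinh (k * s / 2)) (k / 2 * cosh (k * s / 2)) s := by
  have h : HasDerivAt (fun s => k * s / 2) (k / 2) s := by
    simpa using ((hasDerivAt_id s).const_mul k).div_const 2
  exact h.sinh.congr_deriv (by ring)

lemma hasDerivAt_phi {α : ℝ} (hα : 0 < α) (s : ℝ) : HasDerivAt (phi α) (phi' α s) s := by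
  have h1 := hasDerivAt_two_cosh 1 s
  have h2 := (hasDerivAt_two_cosh α s).rpow_const (p := 1 / α) (Or.inl (two_cosh_pos _).ne')
  simp only [one_mul] at h1
  refine HasDerivAt.congr_deriv (f := phi α) ((h1.sub h2).const_mul (2 ^ (-(1 / α)))) ?_
  rw [phi']
  field_simp

lemma hasDerivAt_phi' {α : ℝ} (hα : 0 < α) (s : ℝ) :
    HasDerivAt (phi' α) (phi α s / 4 - W α s) s := by
  have h1 := hasDerivAt_sinh' 1 s
  have h2 := (hasDerivAt_two_cosh α s).rpow_const (p := 1 / α - 1) (Or.inl (two_cosh_pos _).ne')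
  have h3 := h2.mul (hasDerivAt_sinh' α s)
  simp only [one_mul] at h1
  refine HasDerivAt.congr_deriv (f := phi' α) ((h1.sub h3).const_mul (2 ^ (-(1 / α)))) ?_
  have hC := two_cosh_pos (α * s / 2)
  have hsq := cosh_sq (α * s / 2)
  have e1 : (2 * cosh (α * s / 2)) ^ (1 / α - 1)
      = (2 * cosh (α * s / 2)) ^ (1 / α - 2) * (2 * cosh (α * s / 2)) := by
    rw [← rpow_add_one hC.ne']; ring_nf
  have e2 : (2 * cosh (α * s / 2)) ^ (1 / α)
      = (2 * cosh (α * s / 2)) ^ (1 / α - 2) * (2 * cosh (α * s / 2)) ^ 2 := by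
    rw [← rpow_natCast, ← rpow_add hC]; norm_num
  have e3 : 1 / α - 1 - 1 = 1 / α - 2 := by ring
  rw [phi, W, e3, e1, e2]
  have hs : sinh (α * s / 2) ^ 2 = cosh (α * s / 2) ^ 2 - 1 := by rw [hsq]; ring
  have e4 : α * (1 / α) = 1 := by field_simp
  set A := (2 * cosh (α * s / 2)) ^ (1 / α - 2)
  set c := cosh (α * s / 2)
  set t := sinh (α * s / 2)
  have e5 : α * t * (1 / α - 1) * A * t = (1 - α) * A * (c ^ 2 - 1) := by
    rw [← hs]; linear_combination (A * t ^ 2) * e4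
  rw [e5]
  ring

lemma continuous_W (α : ℝ) : Continuous (W α) := by
  unfold W
  exact continuous_const.mul ((by fun_prop : Continuous fun s : ℝ => 2 * cosh (α * s / 2)).rpow_const
    fun s => Or.inl (two_cosh_pos _).ne')

lemma continuous_phi {α : ℝ} (hα : 0 < α) : Continuous (phi α) :=
  continuous_iff_continuousAt.mpr fun s => (hasDerivAt_phi hα s).continuousAt

lemma continuous_phi' {α : ℝ} (hα : 0 < α) : Continuous (phi' α) :=
  continuous_iff_continuousAt.mpr fun s => (hasDerivAt_phi' hα s).continuousAt

lemma two_cosh_rpow {α s p : ℝ} :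
    (2 * cosh (α * s / 2)) ^ p = exp (p * (α * s / 2)) * (1 + exp (-(α * s))) ^ p := by
  have : 2 * cosh (α * s / 2) = exp (α * s / 2) * (1 + exp (-(α * s))) := by
    rw [cosh_eq, mul_add, ← exp_add]; ring_nf
  rw [this, mul_rpow (exp_pos _).le (by positivity), ← exp_mul]
  ring_nf

/-! ### Decay and integrability -/

/-- The common exponential decay rate of `phi α`, its derivative and `W α`. -/
noncomputable def rate (α : ℝ) : ℝ := min (1 / 2) (α - 1 / 2)

lemma rate_pos {α : ℝ} (hα : 1 / 2 < α) : 0 < rate α := lt_min (by norm_num) (by linarith)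

lemma one_add_rpow_bounds {a y : ℝ} (ha : 0 ≤ a) (ha2 : a ≤ 2) (hy : 0 ≤ y) (hy1 : y ≤ 1) :
    1 ≤ (1 + y) ^ a ∧ (1 + y) ^ a ≤ 1 + 3 * y := by
  refine ⟨one_le_rpow (by linarith) ha, ?_⟩
  calc (1 + y) ^ a ≤ (1 + y) ^ (2 : ℝ) := rpow_le_rpow_of_exponent_le (by linarith) ha2
    _ = (1 + y) ^ 2 := by norm_cast
    _ ≤ 1 + 3 * y := by nlinarith

lemma two_rpow_le_one {α : ℝ} (hα : 0 < α) : (2 : ℝ) ^ (-(1 / α)) ≤ 1 :=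
  rpow_le_one_of_one_le_of_nonpos (by norm_num) (by simp [hα.le])

lemma exp_facts (α : ℝ) {s : ℝ} (hs : 0 ≤ s) :
    exp (-(s / 2)) ≤ exp (-rate α * s) ∧
    exp (s / 2) * exp (-(α * s)) ≤ exp (-rate α * s) := by
  have h1 : rate α ≤ 1 / 2 := min_le_left _ _
  have h2 : rate α ≤ α - 1 / 2 := min_le_right _ _
  rw [← exp_add]
  constructor <;> apply exp_le_exp.mpr <;> nlinarith

/-- The leading terms `exp (s/2)` of `2 cosh (s/2)` and `(2 cosh (α s / 2)) ^ (1/α)` cancel. -/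
lemma phi_bound_nonneg {α s : ℝ} (hα : 1 / 2 < α) (hs : 0 ≤ s) :
    |phi α s| ≤ 4 * exp (-rate α * s) := by
  have hα0 : 0 < α := by linarith
  have ha2 : 1 / α ≤ 2 := by rw [div_le_iff₀ hα0]; linarith
  have hy1 : exp (-(α * s)) ≤ 1 := exp_le_one_iff.mpr (by simp; positivity)
  obtain ⟨b1, b2⟩ := one_add_rpow_bounds (by positivity : 0 ≤ 1 / α) ha2 (exp_pos _).le hy1
  obtain ⟨f1, f2⟩ := exp_facts α hs
  have e : 1 / α * (α * s / 2) = s / 2 := by field_simp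
  have hE := exp_pos (s / 2)
  have h0 := exp_pos (-(s / 2))
  have k : |2 * cosh (s / 2) - (2 * cosh (α * s / 2)) ^ (1 / α)| ≤ 4 * exp (-rate α * s) := by
    rw [two_cosh_rpow, e, cosh_eq, abs_le]
    constructor <;> nlinarith
  rw [phi, abs_mul, abs_of_pos (by positivity)]
  exact (mul_le_of_le_one_left (abs_nonneg _) (two_rpow_le_one hα0)).trans k

lemma phi'_bound_nonneg {α s : ℝ} (hα : 1 / 2 < α) (hs : 0 ≤ s) :
    |phi' α s| ≤ 4 * exp (-rate α * s) := by
  have hα0 : 0 < α := by linarith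
  have ha2 : 1 / α ≤ 2 := by rw [div_le_iff₀ hα0]; linarith
  have hy1 : exp (-(α * s)) ≤ 1 := exp_le_one_iff.mpr (by simp; positivity)
  obtain ⟨b1, b2⟩ := one_add_rpow_bounds (by positivity : 0 ≤ 1 / α) ha2 (exp_pos _).le hy1
  obtain ⟨f1, f2⟩ := exp_facts α hs
  have hE := exp_pos (s / 2)
  have h0 := exp_pos (-(s / 2))
  have hy0 := exp_pos (-(α * s))
  have e : (2 * cosh (α * s / 2)) ^ (1 / α - 1) * sinh (α * s / 2)
      = exp (s / 2) * ((1 + exp (-(α * s))) ^ (1 / α) * ((1 - exp (-(α * s))) / (1 + exp (-(α * s))))) / 2 := by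
    have e1 : sinh (α * s / 2) = exp (α * s / 2) * (1 - exp (-(α * s))) / 2 := by
      rw [sinh_eq, mul_sub, ← exp_add]; ring_nf
    have e2 : (1 / α - 1) * (α * s / 2) = s / 2 - α * s / 2 := by field_simp
    rw [two_cosh_rpow, e1, e2, exp_sub, rpow_sub_one (by positivity)]
    field_simp
  have k : |sinh (s / 2) - (2 * cosh (α * s / 2)) ^ (1 / α - 1) * sinh (α * s / 2)|
      ≤ 4 * exp (-rate α * s) := by
    rw [e, sinh_eq]
    generalize exp (-(α * s)) = y at *
    generalize (1 + y) ^ (1 / α) = P at *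
    have q1 : (1 - y) / (1 + y) ≤ 1 := by rw [div_le_one (by positivity)]; linarith
    have q2 : 1 - 2 * y ≤ (1 - y) / (1 + y) := by rw [le_div_iff₀ (by positivity)]; nlinarith
    have q0 : 0 ≤ (1 - y) / (1 + y) := div_nonneg (by linarith) (by positivity)
    generalize (1 - y) / (1 + y) = Q at *
    have p1 : 1 - 2 * y ≤ P * Q := by nlinarith
    have p2 : P * Q ≤ 1 + 3 * y := by nlinarith
    rw [abs_le]
    constructor <;> nlinarith
  rw [phi', abs_mul, abs_of_pos (by positivity)]
  exact (mul_le_of_le_one_left (abs_nonneg _) (two_rpow_le_one hα0)).trans k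

lemma W_bound_nonneg {α s : ℝ} (hα : 1 / 2 < α) (hs : 0 ≤ s) :
    |W α s| ≤ |α - 1| * exp (-rate α * s) := by
  have hα0 : 0 < α := by linarith
  have ha2 : 1 / α ≤ 2 := by rw [div_le_iff₀ hα0]; linarith
  have h1 : (2 * cosh (α * s / 2)) ^ (1 / α - 2) ≤ exp (-rate α * s) := by
    rw [two_cosh_rpow]
    have e : (1 / α - 2) * (α * s / 2) = s / 2 + (-(α * s)) := by field_simp; ring
    rw [e, exp_add]
    refine le_trans ?_ (exp_facts α hs).2
    refine mul_le_of_le_one_right (by positivity) ?_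
    exact rpow_le_one_of_one_le_of_nonpos (by simp [exp_nonneg]) (by linarith)
  have h2 := (rpow_pos_of_pos (two_cosh_pos (α * s / 2)) (1 / α - 2)).le
  rw [W, abs_mul, abs_mul, abs_of_pos (by positivity : (0 : ℝ) < 2 ^ (-(1 / α))), abs_of_nonneg h2]
  exact mul_le_mul (mul_le_of_le_one_left (abs_nonneg _) (two_rpow_le_one hα0)) h1 h2 (abs_nonneg _)

lemma phi_neg (α s : ℝ) : phi α (-s) = phi α s := by
  simp [phi, neg_div, mul_neg]

lemma abs_phi'_neg (α s : ℝ) : |phi' α (-s)| = |phi' α s| := by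
  rw [← abs_neg]
  congr 1
  simp [phi', neg_div, mul_neg]
  ring

lemma W_neg (α s : ℝ) : W α (-s) = W α s := by
  simp [W, neg_div, mul_neg]

lemma integrable_phi {α : ℝ} (hα : 1 / 2 < α) : Integrable (phi α) := by
  refine integrable_of_exp_bound (continuous_phi (by linarith)) (rate_pos hα) (C := 4) fun s => ?_
  rcases abs_cases s with ⟨h, h0⟩ | ⟨h, h0⟩ <;> rw [h]
  · exact phi_bound_nonneg hα h0
  · rw [← phi_neg]; exact phi_bound_nonneg hα (by linarith)

lemma integrable_phi' {α : ℝ} (hα : 1 / 2 < α) : Integrable (phi' α) := by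
  refine integrable_of_exp_bound (continuous_phi' (by linarith)) (rate_pos hα) (C := 4) fun s => ?_
  rcases abs_cases s with ⟨h, h0⟩ | ⟨h, h0⟩ <;> rw [h]
  · exact phi'_bound_nonneg hα h0
  · rw [← abs_phi'_neg]; exact phi'_bound_nonneg hα (by linarith)

lemma integrable_W {α : ℝ} (hα : 1 / 2 < α) : Integrable (W α) := by
  refine integrable_of_exp_bound (continuous_W α) (rate_pos hα) (C := |α - 1|) fun s => ?_
  rcases abs_cases s with ⟨h, h0⟩ | ⟨h, h0⟩ <;> rw [h]
  · exact W_bound_nonneg hα h0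
  · rw [← W_neg]; exact W_bound_nonneg hα (by linarith)

/-! ### Fourier transform of `phi` and positive definiteness -/

/-- The Fourier transform of `phi α`, for `α > 1/2`; see `fourier_phi`. -/
noncomputable def density (α v : ℝ) : ℝ :=
  2 ^ (-(1 / α)) * gammaRatio (1 / α) (-2 * π * v) / ((2 * π * v) ^ 2 + 1 / 4)

/-- Taking Fourier transforms in `phi'' = phi / 4 - W` divides `𝓕 (W α)` by
`(2 π v) ^ 2 + 1 / 4`. -/
lemma fourier_phi {α : ℝ} (hα : 1 / 2 < α) (v : ℝ) :
    𝓕 (fun s => (phi α s : ℂ)) v = (density α v : ℂ) := by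
  have hα0 : 0 < α := by linarith
  have d1 : deriv (fun s => (phi α s : ℂ)) = fun s => (phi' α s : ℂ) :=
    funext fun s => (hasDerivAt_phi hα0 s).ofReal_comp.deriv
  have d2 : deriv (fun s => (phi' α s : ℂ)) = fun s => ((phi α s / 4 - W α s : ℝ) : ℂ) :=
    funext fun s => (hasDerivAt_phi' hα0 s).ofReal_comp.deriv
  have i0 : Integrable fun s => (phi α s : ℂ) := (integrable_phi hα).ofReal
  have i1 : Integrable fun s => (phi' α s : ℂ) := (integrable_phi' hα).ofReal
  have iW : Integrable fun s => (W α s : ℂ) := (integrable_W hα).ofReal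
  have i2 : Integrable fun s => ((phi α s / 4 - W α s : ℝ) : ℂ) :=
    (((integrable_phi hα).div_const 4).sub (integrable_W hα)).ofReal
  have F1 := congrFun (Real.fourier_deriv i0
    (fun s => (hasDerivAt_phi hα0 s).ofReal_comp.differentiableAt) (d1 ▸ i1)) v
  have F2 := congrFun (Real.fourier_deriv i1
    (fun s => (hasDerivAt_phi' hα0 s).ofReal_comp.differentiableAt) (d2 ▸ i2)) v
  rw [d1] at F1
  rw [d2, F1] at F2
  have hcv : ∀ {f : ℝ → ℂ}, Integrable f → Integrable fun s : ℝ =>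
      Complex.exp (((-2 * π * s * v : ℝ) : ℂ) * Complex.I) * f s := by
    intro f hf
    refine hf.bdd_mul (c := 1) (by fun_prop) (Eventually.of_forall fun s => ?_)
    rw [Complex.norm_exp_ofReal_mul_I]
  have F3 : 𝓕 (fun s => ((phi α s / 4 - W α s : ℝ) : ℂ)) v
      = 𝓕 (fun s => (phi α s : ℂ)) v / 4 - 𝓕 (fun s => (W α s : ℂ)) v := by
    simp only [Real.fourier_real_eq_integral_exp_smul, smul_eq_mul]
    rw [← integral_div, ← integral_sub ((hcv i0).div_const 4) (hcv iW)]
    congr 1; ext s; push_cast; ring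
  rw [F3, fourier_W hα] at F2
  have hk : ((2 * π * v) ^ 2 + 1 / 4 : ℝ) ≠ 0 := by positivity
  have hk' : (((2 * π * v) ^ 2 + 1 / 4 : ℝ) : ℂ) ≠ 0 := Complex.ofReal_ne_zero.mpr hk
  rw [density, Complex.ofReal_div, eq_div_iff hk']
  push_cast at F2 ⊢
  simp only [smul_eq_mul] at F2
  linear_combination F2 + (4 * (π:ℂ) ^ 2 * v ^ 2 * 𝓕 (fun s => (phi α s : ℂ)) v) * Complex.I_sq

/-- `𝓕 (W α)` is bounded since `W α` is integrable, so the factor `1 / ((2 π v) ^ 2 + 1 / 4)`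
dominates. -/
lemma integrable_density {α : ℝ} (hα : 1 / 2 < α) : Integrable (density α) := by
  set C := ∫ s, ‖(W α s : ℂ)‖ with hC
  have hb : ∀ v, |2 ^ (-(1 / α)) * gammaRatio (1 / α) (-2 * π * v)| ≤ C := by
    intro v
    rw [← Real.norm_eq_abs, ← Complex.norm_real, ← fourier_W hα, Real.fourier_real_eq_integral_exp_smul]
    refine (norm_integral_le_integral_norm _).trans (le_of_eq ?_)
    congr 1; ext s
    rw [norm_smul, Complex.norm_exp_ofReal_mul_I, one_mul]
  have hI : Integrable fun v : ℝ => 4 * C * (1 + v ^ 2)⁻¹ :=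
    integrable_inv_one_add_sq.const_mul _
  have hm : AEStronglyMeasurable (density α) := by
    have h1 : Continuous (𝓕 (fun s => (phi α s : ℂ))) :=
      VectorFourier.fourierIntegral_continuous Real.continuous_fourierChar
        (L := innerₗ ℝ) continuous_inner (integrable_phi hα).ofReal
    have h2 : density α = fun v => (𝓕 (fun s => (phi α s : ℂ)) v).re := by
      ext v; rw [fourier_phi hα, Complex.ofReal_re]
    rw [h2]
    exact (Complex.continuous_re.comp h1).aestronglyMeasurable
  refine hI.mono' hm (Eventually.of_forall fun v => ?_)
  have hC0 : 0 ≤ C := integral_nonneg fun s => norm_nonneg _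
  have hpos : (0 : ℝ) < (2 * π * v) ^ 2 + 1 / 4 := by positivity
  rw [Real.norm_eq_abs, density, abs_div, abs_of_pos hpos, ← div_eq_mul_inv,
    div_le_div_iff₀ hpos (by positivity)]
  have hpi : 1 ≤ π ^ 2 := by nlinarith [pi_gt_three]
  have : 1 + v ^ 2 ≤ 4 * ((2 * π * v) ^ 2 + 1 / 4) := by nlinarith [sq_nonneg v]
  calc _ ≤ C * (4 * ((2 * π * v) ^ 2 + 1 / 4)) :=
        mul_le_mul (hb v) this (by positivity) hC0
    _ = _ := by ring

/-- Fourier inversion for `phi α`. -/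
lemma phi_eq_integral {α : ℝ} (hα : 1 / 2 < α) (s : ℝ) :
    phi α s = ∫ v, cos (2 * π * (v * s)) * density α v := by
  have h1 : 𝓕 (fun s => (phi α s : ℂ)) = fun v => (density α v : ℂ) := funext (fourier_phi hα)
  have i0 : Integrable fun s => (phi α s : ℂ) := (integrable_phi hα).ofReal
  have h2 := i0.fourierInv_fourier_eq (by rw [h1]; exact (integrable_density hα).ofReal)
    (Complex.continuous_ofReal.comp (continuous_phi (by linarith : 0 < α))).continuousAt (v := s)
  have h3 : Integrable fun v : ℝ =>
      Complex.exp (((2 * π * (v * s) : ℝ) : ℂ) * Complex.I) * (density α v : ℂ) := by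
    refine (integrable_density hα).ofReal.bdd_mul (c := 1) (by fun_prop)
      (Eventually.of_forall fun s => ?_)
    rw [Complex.norm_exp_ofReal_mul_I]
  rw [h1, Real.fourierInv_eq'] at h2
  have h4 := congrArg Complex.re h2
  simp only [Complex.ofReal_re, smul_eq_mul, RCLike.inner_apply, conj_trivial] at h4
  simp_rw [mul_comm s] at h4
  rw [← h4, ← Complex.reCLM_apply, ← Complex.reCLM.integral_comp_comm h3]
  congr 1; ext v
  rw [Complex.reCLM_apply, Complex.re_mul_ofReal, Complex.exp_ofReal_mul_I_re]

lemma integrable_cos_mul_density {α : ℝ} (hα : 1 / 2 < α) (s : ℝ) :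
    Integrable fun v => cos (2 * π * (v * s)) * density α v := by
  refine (integrable_density hα).bdd_mul (c := 1) (by fun_prop) (Eventually.of_forall fun v => ?_)
  exact abs_cos_le_one _

lemma sum_cos_eq {n : ℕ} (z s : Fin n → ℝ) (k : ℝ) :
    ∑ i, ∑ j, z i * z j * cos (k * (s i - s j))
      = (∑ i, z i * cos (k * s i)) ^ 2 + (∑ i, z i * sin (k * s i)) ^ 2 := by
  simp only [sq, Finset.sum_mul_sum, ← Finset.sum_add_distrib]
  refine Finset.sum_congr rfl fun i _ => Finset.sum_congr rfl fun j _ => ?_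
  rw [mul_sub, cos_sub]; ring

/-- The easy half of Bochner's theorem for `phi α - phi β`: an ordering of the Fourier transforms
yields one of the quadratic forms. -/
lemma phi_form_mono {α β : ℝ} (hα : 1 / 2 < α) (hβ : 1 / 2 < β)
    (h : ∀ v, density β v ≤ density α v) {n : ℕ} (z s : Fin n → ℝ) :
    ∑ i, ∑ j, z i * z j * phi β (s i - s j) ≤ ∑ i, ∑ j, z i * z j * phi α (s i - s j) := by
  have key : ∀ γ : ℝ, 1 / 2 < γ →
      (Integrable fun v => (∑ i, ∑ j, z i * z j * cos (2 * π * v * (s i - s j))) * density γ v) ∧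
      ∑ i, ∑ j, z i * z j * phi γ (s i - s j)
        = ∫ v, (∑ i, ∑ j, z i * z j * cos (2 * π * v * (s i - s j))) * density γ v := by
    intro γ hγ
    have hi : ∀ i j, Integrable fun v =>
        z i * z j * (cos (2 * π * (v * (s i - s j))) * density γ v) :=
      fun i j => (integrable_cos_mul_density hγ _).const_mul _
    have e : (fun v => (∑ i, ∑ j, z i * z j * cos (2 * π * v * (s i - s j))) * density γ v)
        = fun v => ∑ i, ∑ j, z i * z j * (cos (2 * π * (v * (s i - s j))) * density γ v) := by
      ext v
      simp only [Finset.sum_mul, mul_assoc]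
    rw [e]
    refine ⟨integrable_finsetSum _ fun i _ => integrable_finsetSum _ fun j _ => hi i j, ?_⟩
    rw [integral_finsetSum _ fun i _ => integrable_finsetSum _ fun j _ => hi i j]
    refine Finset.sum_congr rfl fun i _ => ?_
    rw [integral_finsetSum _ fun j _ => hi i j]
    refine Finset.sum_congr rfl fun j _ => ?_
    rw [integral_const_mul, phi_eq_integral hγ]
  rw [(key β hβ).2, (key α hα).2]
  refine integral_mono (key β hβ).1 (key α hα).1 fun v => ?_
  refine mul_le_mul_of_nonneg_left (h v) ?_
  rw [sum_cos_eq]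
  positivity

/-- For `β ≤ 1` the two sides have opposite signs; for `β > 1` both `2 ^ (-1/α)` and the
Gamma quotient are monotone in `α`. -/
lemma density_mono {α β : ℝ} (hα : 1 ≤ α) (hβ : 1 / 2 < β) (hβα : β ≤ α) (v : ℝ) :
    density β v ≤ density α v := by
  have hβ0 : 0 < β := by linarith
  have hα0 : 0 < α := by linarith
  refine div_le_div_of_nonneg_right ?_ (by positivity)
  have hG : ∀ γ : ℝ, 1 / 2 < γ → 0 < Gamma (2 - 1 / γ) := by
    intro γ hγ
    refine Real.Gamma_pos_of_pos ?_
    rw [sub_pos, div_lt_iff₀ (by linarith)]; linarith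
  have hα1 : 0 ≤ gammaRatio (1 / α) (-2 * π * v) := by
    have : 1 / α ≤ 1 := by rw [div_le_one hα0]; exact hα
    exact mul_nonneg (div_nonneg (by positivity) (hG α (by linarith)).le) (by linarith)
  rcases le_or_gt β 1 with h1 | h1
  · have : 1 ≤ 1 / β := by rw [le_div_iff₀ hβ0]; linarith
    have h2 : gammaRatio (1 / β) (-2 * π * v) ≤ 0 :=
      mul_nonpos_of_nonneg_of_nonpos (div_nonneg (by positivity) (hG β hβ).le) (by linarith)
    exact (mul_nonpos_of_nonneg_of_nonpos (by positivity) h2).trans (by positivity)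
  · have hab : 1 / α ≤ 1 / β := one_div_le_one_div_of_le hβ0 hβα
    have hb1 : 1 / β < 1 := by rw [div_lt_one hβ0]; exact h1
    have h2 := gammaRatio_antitone (by positivity) hab hb1 (-2 * π * v)
    have h3 : (2 : ℝ) ^ (-(1 / β)) ≤ 2 ^ (-(1 / α)) :=
      rpow_le_rpow_of_exponent_le (by norm_num) (by linarith)
    calc _ ≤ (2 : ℝ) ^ (-(1 / β)) * gammaRatio (1 / α) (-2 * π * v) :=
          mul_le_mul_of_nonneg_left h2 (by positivity)
      _ ≤ _ := mul_le_mul_of_nonneg_right h3 hα1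

/-! ### Power means -/

/-- The power mean of exponent `α` of two nonnegative reals. -/
noncomputable def pm (α x y : ℝ) : ℝ := ((x ^ α + y ^ α) / 2) ^ (1 / α)

lemma pm_exp {α : ℝ} (hα : 0 < α) (s t : ℝ) :
    pm α (exp s) (exp t)
      = 2 ^ (-(1 / α)) * (exp s + exp t) - exp (s / 2) * exp (t / 2) * phi α (s - t) := by
  have e1 : (exp s ^ α + exp t ^ α) / 2
      = exp (α * ((s + t) / 2)) * (2 * cosh (α * (s - t) / 2)) * 2⁻¹ := by
    rw [← exp_mul, ← exp_mul, cosh_eq, mul_div_cancel₀ _ (two_ne_zero), mul_add, ← exp_add,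
      ← exp_add]
    ring_nf
  have e2 : exp (s / 2) * exp (t / 2) * (2 * cosh ((s - t) / 2)) = exp s + exp t := by
    rw [cosh_eq, mul_div_cancel₀ _ (two_ne_zero), mul_add, ← exp_add, ← exp_add,
      ← exp_add]
    ring_nf
  have hc := two_cosh_pos (α * (s - t) / 2)
  rw [pm, e1, mul_rpow (by positivity) (by positivity), mul_rpow (by positivity) hc.le, ← exp_mul,
    phi, ← e2, inv_rpow (by norm_num), ← rpow_neg (by norm_num)]
  have e3 : α * ((s + t) / 2) * (1 / α) = s / 2 + t / 2 := by field_simp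
  rw [e3, exp_add]
  ring

lemma pm_form_mono {α β : ℝ} (hα : 1 ≤ α) (hβ : 1 / 2 < β) (hβα : β ≤ α) {n : ℕ}
    (x c : Fin n → ℝ) (hx : ∀ i, 0 < x i) (hc : ∑ i, c i = 0) :
    ∑ i, ∑ j, c i * c j * pm α (x i) (x j) ≤ ∑ i, ∑ j, c i * c j * pm β (x i) (x j) := by
  have key : ∀ γ : ℝ, 0 < γ → ∑ i, ∑ j, c i * c j * pm γ (x i) (x j)
      = - ∑ i, ∑ j, (c i * exp (log (x i) / 2)) * (c j * exp (log (x j) / 2))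
          * phi γ (log (x i) - log (x j)) := by
    intro γ hγ
    -- The first two summands vanish on summation because `∑ i, c i = 0`.
    have e : ∀ i j, c i * c j * pm γ (x i) (x j)
        = (2 ^ (-(1 / γ)) * (c i * x i)) * c j + c i * (2 ^ (-(1 / γ)) * (c j * x j))
          - (c i * exp (log (x i) / 2)) * (c j * exp (log (x j) / 2))
            * phi γ (log (x i) - log (x j)) := by
      intro i j
      have h := pm_exp hγ (log (x i)) (log (x j))
      rw [exp_log (hx i), exp_log (hx j)] at h
      rw [h]; ring
    simp_rw [e, Finset.sum_sub_distrib, Finset.sum_add_distrib, ← Finset.mul_sum, hc, mul_zero,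
      ← Finset.sum_mul, hc]
    simp
  rw [key α (by linarith), key β (by linarith), neg_le_neg_iff]
  exact phi_form_mono (by linarith) hβ (density_mono hα hβ hβα) _ _

lemma continuousAt_pm_exponent {β x y : ℝ} (hβ : 0 < β) (hx : 0 < x) (hy : 0 < y) :
    ContinuousAt (fun γ => pm γ x y) β := by
  have hpos : (x ^ β + y ^ β) / 2 ≠ 0 := by positivity
  unfold pm
  refine ContinuousAt.rpow ?_ (continuousAt_const.div continuousAt_id hβ.ne') (Or.inl hpos)
  exact ((continuousAt_const.rpow continuousAt_id (Or.inl hx.ne')).add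
    (continuousAt_const.rpow continuousAt_id (Or.inl hy.ne'))).div_const 2

lemma continuous_pm {α : ℝ} (hα : 0 < α) : Continuous fun p : ℝ × ℝ => pm α p.1 p.2 := by
  unfold pm
  refine Continuous.rpow_const ?_ fun _ => Or.inr (by positivity)
  exact ((continuous_fst.rpow_const fun _ => Or.inr hα.le).add
    (continuous_snd.rpow_const fun _ => Or.inr hα.le)).div_const 2

/-- The exponent `β = 1/2`, where `phi β` is no longer integrable, is reached as a limit from the
right. -/
lemma pm_form_mono_half {α β : ℝ} (hα : 1 ≤ α) (hβ : 1 / 2 ≤ β) (hβα : β < α) {n : ℕ}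
    (x c : Fin n → ℝ) (hx : ∀ i, 0 < x i) (hc : ∑ i, c i = 0) :
    ∑ i, ∑ j, c i * c j * pm α (x i) (x j) ≤ ∑ i, ∑ j, c i * c j * pm β (x i) (x j) := by
  have hT : Tendsto (fun γ => ∑ i, ∑ j, c i * c j * pm γ (x i) (x j)) (𝓝[>] β)
      (𝓝 (∑ i, ∑ j, c i * c j * pm β (x i) (x j))) := by
    refine tendsto_finsetSum _ fun i _ => tendsto_finsetSum _ fun j _ => Tendsto.const_mul _ ?_
    exact (continuousAt_pm_exponent (by linarith) (hx i) (hx j)).tendsto.mono_left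
      nhdsWithin_le_nhds
  refine ge_of_tendsto hT ?_
  filter_upwards [Ioo_mem_nhdsGT hβα] with γ hγ
  exact pm_form_mono hα (by linarith [hγ.1]) hγ.2.le x c hx hc

/-- Points with coordinate `0`, which have no logarithm, are reached by the shift `x + ε`. -/
lemma pm_form_mono_nonneg {α β : ℝ} (hα : 1 ≤ α) (hβ : 1 / 2 ≤ β) (hβα : β < α) {n : ℕ}
    (x c : Fin n → ℝ) (hx : ∀ i, 0 ≤ x i) (hc : ∑ i, c i = 0) :
    ∑ i, ∑ j, c i * c j * pm α (x i) (x j) ≤ ∑ i, ∑ j, c i * c j * pm β (x i) (x j) := by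
  have hT : ∀ γ : ℝ, 0 < γ →
      Tendsto (fun ε : ℝ => ∑ i, ∑ j, c i * c j * pm γ (x i + ε) (x j + ε)) (𝓝[>] 0)
      (𝓝 (∑ i, ∑ j, c i * c j * pm γ (x i) (x j))) := by
    intro γ hγ
    refine tendsto_finsetSum _ fun i _ => tendsto_finsetSum _ fun j _ => Tendsto.const_mul _ ?_
    have h := (continuous_pm hγ).comp
      (by fun_prop : Continuous fun ε : ℝ => (x i + ε, x j + ε))
    simpa [Function.comp_def] using (h.tendsto 0).mono_left nhdsWithin_le_nhds
  refine le_of_tendsto_of_tendsto (hT α (by linarith)) (hT β (by linarith)) ?_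
  filter_upwards [self_mem_nhdsWithin] with ε hε
  exact pm_form_mono_half hα hβ hβα _ c (fun i => add_pos_of_nonneg_of_pos (hx i) hε) hc

/-- The power mean inequality, by convexity of `t ↦ t ^ (α / β)`. -/
lemma pm_le_pm {α β x y : ℝ} (hβ : 0 < β) (hβα : β ≤ α) (hx : 0 ≤ x) (hy : 0 ≤ y) :
    pm β x y ≤ pm α x y := by
  have hα : 0 < α := by linarith
  have h1 : 1 ≤ α / β := by rw [le_div_iff₀ hβ]; linarith
  have h2 := (convexOn_rpow h1).2 (rpow_nonneg hx β) (rpow_nonneg hy β)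
    (by norm_num : (0 : ℝ) ≤ 1 / 2) (by norm_num : (0 : ℝ) ≤ 1 / 2) (by norm_num)
  have e : β * (α / β) = α := by field_simp
  simp only [smul_eq_mul, ← rpow_mul hx, ← rpow_mul hy, e] at h2
  have h3 : 0 ≤ (x ^ β + y ^ β) / 2 := by positivity
  have h4 : ((x ^ β + y ^ β) / 2) ^ (α / β) ≤ (x ^ α + y ^ α) / 2 := by
    have e1 : (x ^ β + y ^ β) / 2 = 1 / 2 * x ^ β + 1 / 2 * y ^ β := by ring
    rw [e1]
    exact h2.trans (by linarith)
  have h5 := rpow_le_rpow (by positivity) h4 (by positivity : 0 ≤ 1 / α)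
  rw [← rpow_mul h3] at h5
  have e2 : α / β * (1 / α) = 1 / β := by field_simp
  rwa [e2] at h5

lemma pm_mul {α c x y : ℝ} (hα : 0 < α) (hc : 0 ≤ c) (hx : 0 ≤ x) (hy : 0 ≤ y) :
    pm α (c * x) (c * y) = c * pm α x y := by
  have h : ((c * x) ^ α + (c * y) ^ α) / 2 = c ^ α * ((x ^ α + y ^ α) / 2) := by
    rw [mul_rpow hc hx, mul_rpow hc hy]; ring
  rw [pm, h, mul_rpow (by positivity) (by positivity), ← rpow_mul hc, mul_one_div_cancel hα.ne',
    rpow_one, pm]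

end PowerMean

theorem d_alpha_beta_half_homogeneous_and_neg_def
    (a b : ℝ) (ha : 1 ≤ a) (hb : 1 / 2 ≤ b) (hba : b ≤ a) (hne : a ≠ b)
    (d : ℝ≥0 → ℝ≥0 → ℝ)
    (hd : ∀ x y : ℝ≥0, d x y =
      Real.sqrt ((a * b / (a - b)) *
        ((((x : ℝ) ^ a + (y : ℝ) ^ a) / 2) ^ (1 / a) -
          (((x : ℝ) ^ b + (y : ℝ) ^ b) / 2) ^ (1 / b)))) :
    (∀ c x y : ℝ≥0, d (c * x) (c * y) = Real.sqrt c * d x y) ∧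
      IsNegDefKernel (fun x y : ℝ≥0 => (d x y) ^ 2) := by
  have hlt : b < a := lt_of_le_of_ne hba hne.symm
  have ha0 : 0 < a := by linarith
  have hb0 : 0 < b := by linarith
  have hK : 0 ≤ a * b / (a - b) := div_nonneg (by positivity) (by linarith)
  have hd' : ∀ x y : ℝ≥0, d x y
      = Real.sqrt (a * b / (a - b) * (PowerMean.pm a x y - PowerMean.pm b x y)) := hd
  have hsq : ∀ x y : ℝ≥0, d x y ^ 2
      = a * b / (a - b) * (PowerMean.pm a x y - PowerMean.pm b x y) := by
    intro x y
    rw [hd', Real.sq_sqrt]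
    exact mul_nonneg hK (sub_nonneg.mpr (PowerMean.pm_le_pm hb0 hba x.2 y.2))
  refine ⟨fun c x y => ?_, fun x y => ?_, fun n x c hc => ?_⟩
  · rw [hd', hd', ← Real.sqrt_mul c.coe_nonneg, NNReal.coe_mul, NNReal.coe_mul,
      PowerMean.pm_mul ha0 c.coe_nonneg x.coe_nonneg y.coe_nonneg,
      PowerMean.pm_mul hb0 c.coe_nonneg x.coe_nonneg y.coe_nonneg]
    congr 1
    ring
  · simp only [hsq, PowerMean.pm]
    rw [add_comm ((x : ℝ) ^ a), add_comm ((x : ℝ) ^ b)]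
  · have h := PowerMean.pm_form_mono_nonneg ha hb hlt (fun i => (x i : ℝ)) c (fun i => (x i).2) hc
    have e : ∑ i, ∑ j, c i * c j * d (x i) (x j) ^ 2
        = a * b / (a - b) * (∑ i, ∑ j, c i * c j * PowerMean.pm a (x i) (x j)
          - ∑ i, ∑ j, c i * c j * PowerMean.pm b (x i) (x j)) := by
      simp only [hsq, ← Finset.sum_sub_distrib, Finset.mul_sum]
      exact Finset.sum_congr rfl fun i _ => Finset.sum_congr rfl fun j _ => by ring
    change ∑ i, ∑ j, c i * c j * d (x i) (x j) ^ 2 ≤ 0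
    rw [e]
    exact mul_nonpos_of_nonneg_of_nonpos hK (by linarith)
end

section
/- The Jensen–Shannon kernel is negative definite: the function j : ℝ>0 × ℝ>0 → ℝ defined by j(x, y) = (1/2)·( x·ln(2x/(x+y)) + y·ln(2y/(x+y)) ) is a negative definite kernel on the positive reals ℝ>0. -/
/-!
Up to terms depending on `x` alone, on `y` alone, or affine in `x + y`, the kernel is
`-(1/2) (x + y) log (x + y)`, and such terms disappear against coefficients summing to zero. It
remains to see that `Q = ∑ᵢⱼ cᵢ cⱼ s log s ≥ 0`, where `s = xᵢ + xⱼ`.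

Put `H(T) = -∑ᵢⱼ cᵢ cⱼ s log (s + T)`, so `H(0) = -Q`. Since `-s/(s + T) = T/(s + T) - 1`, we have
`H'(T) = T ∑ᵢⱼ cᵢ cⱼ / (s + T)`, which is nonnegative for `T > 0` because the Cauchy kernel
`1/(p + q) = ∫₀¹ u^(p + q - 1) du` is positive semidefinite (`cauchy_kernel_nonneg`). Hence `H` is
monotone. Because `∑ᵢⱼ cᵢ cⱼ s = 0`, also `H(T) = -∑ᵢⱼ cᵢ cⱼ s log (1 + s/T)`, which tends to `0`
as `T → ∞`; therefore `-Q = H(0) ≤ 0`.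
-/

open scoped BigOperators

/-- The Cauchy kernel `1/(p + q)` on the positive reals is positive semidefinite. -/
lemma cauchy_kernel_nonneg {n : ℕ} (p c : Fin n → ℝ) (hp : ∀ i, 0 < p i) :
    0 ≤ ∑ i, ∑ j, c i * c j * (1 / (p i + p j)) := by
  have hI : ∀ i j, IntervalIntegrable (fun u : ℝ => c i * c j * u ^ (p i + p j - 1))
      MeasureTheory.volume 0 1 := fun i j =>
    (intervalIntegral.intervalIntegrable_rpow' (by linarith [hp i, hp j])).const_mul _
  have hI' : ∀ i, IntervalIntegrable (fun u : ℝ => ∑ j, c i * c j * u ^ (p i + p j - 1))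
      MeasureTheory.volume 0 1 := fun i => by
    simpa only [Finset.sum_fn] using IntervalIntegrable.sum Finset.univ (fun j _ => hI i j)
  have hrep : ∑ i, ∑ j, c i * c j * (1 / (p i + p j)) =
      ∫ u in (0 : ℝ)..1, ∑ i, ∑ j, c i * c j * u ^ (p i + p j - 1) := by
    rw [intervalIntegral.integral_finsetSum (fun i _ => hI' i)]
    refine Finset.sum_congr rfl fun i _ => ?_
    rw [intervalIntegral.integral_finsetSum (fun j _ => hI i j)]
    refine Finset.sum_congr rfl fun j _ => ?_
    have h := add_pos (hp i) (hp j)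
    rw [intervalIntegral.integral_const_mul, integral_rpow (Or.inl (by linarith))]
    simp [Real.zero_rpow h.ne']
  rw [hrep]
  refine intervalIntegral.integral_nonneg_of_ae_restrict (by norm_num) ?_
  -- The representation of the integrand as a square divided by `u` needs `u ≠ 0`.
  have hne : ∀ᵐ u : ℝ ∂MeasureTheory.volume, u ≠ 0 := MeasureTheory.Measure.ae_ne _ _
  filter_upwards [MeasureTheory.ae_restrict_of_ae hne,
    MeasureTheory.ae_restrict_mem measurableSet_Icc] with u hu0 hu
  have hu' : 0 < u := lt_of_le_of_ne hu.1 hu0.symm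
  have hsq : ∑ i, ∑ j, c i * c j * u ^ (p i + p j - 1) = (∑ i, c i * u ^ p i) ^ 2 / u := by
    rw [sq, Finset.sum_mul_sum, Finset.sum_div]
    refine Finset.sum_congr rfl fun i _ => ?_
    rw [Finset.sum_div]
    refine Finset.sum_congr rfl fun j _ => ?_
    rw [Real.rpow_sub_one hu0, Real.rpow_add hu']
    ring
  rw [hsq]
  exact div_nonneg (sq_nonneg _) hu'.le

lemma sum_sum_left_eq_zero {n : ℕ} (c g : Fin n → ℝ) (hc : ∑ i, c i = 0) :
    ∑ i, ∑ j, c i * c j * g i = 0 := by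
  refine Finset.sum_eq_zero fun i _ => ?_
  rw [← Finset.sum_mul, ← Finset.mul_sum, hc]
  simp

lemma sum_sum_right_eq_zero {n : ℕ} (c g : Fin n → ℝ) (hc : ∑ i, c i = 0) :
    ∑ i, ∑ j, c i * c j * g j = 0 := by
  rw [Finset.sum_comm, ← sum_sum_left_eq_zero c g hc]
  simp only [mul_comm (c _) (c _)]

lemma sum_sum_add_mul_log_nonneg {n : ℕ} (x c : Fin n → ℝ) (hx : ∀ i, 0 < x i)
    (hc : ∑ i, c i = 0) :
    0 ≤ ∑ i, ∑ j, c i * c j * ((x i + x j) * Real.log (x i + x j)) := by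
  have hs : ∀ i j, 0 < x i + x j := fun i j => add_pos (hx i) (hx j)
  have hlin : ∑ i, ∑ j, c i * c j * (x i + x j) = 0 := by
    simp only [mul_add, Finset.sum_add_distrib, sum_sum_left_eq_zero c x hc,
      sum_sum_right_eq_zero c x hc, add_zero]
  set H : ℝ → ℝ := fun T =>
    ∑ i, ∑ j, -(c i * c j * (x i + x j)) * Real.log (x i + x j + T) with hH
  have hderiv : ∀ T, 0 ≤ T → HasDerivAt H
      (∑ i, ∑ j, -(c i * c j * (x i + x j)) * (1 / (x i + x j + T))) T := by
    intro T hT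
    refine HasDerivAt.fun_sum fun i _ => HasDerivAt.fun_sum fun j _ => ?_
    exact (((hasDerivAt_id T).const_add (x i + x j)).log
      (by simpa using (add_pos_of_pos_of_nonneg (hs i j) hT).ne')).const_mul _
  have hmono : MonotoneOn H (Set.Ici 0) := by
    refine monotoneOn_of_deriv_nonneg (convex_Ici 0)
      (fun T hT => (hderiv T hT).continuousAt.continuousWithinAt) ?_ ?_
    · intro T hT
      rw [interior_Ici] at hT
      exact (hderiv T (le_of_lt hT)).differentiableAt.differentiableWithinAt
    · intro T hT
      rw [interior_Ici] at hT
      have hT' : 0 < T := hT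
      rw [(hderiv T hT'.le).deriv]
      have hpos := mul_nonneg hT'.le
        (cauchy_kernel_nonneg (fun i => x i + T / 2) c (fun i => by linarith [hx i]))
      have hone := sum_sum_left_eq_zero c (fun _ => 1) hc
      refine hpos.trans_eq ?_
      rw [← sub_zero (T * _), ← hone, Finset.mul_sum, ← Finset.sum_sub_distrib]
      refine Finset.sum_congr rfl fun i _ => ?_
      rw [Finset.mul_sum, ← Finset.sum_sub_distrib]
      refine Finset.sum_congr rfl fun j _ => ?_
      have h1 : x i + T / 2 + (x j + T / 2) = x i + x j + T := by ring
      have h2 : x i + x j + T ≠ 0 := (add_pos (hs i j) hT').ne'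
      rw [h1]
      field_simp
      ring
  have hlim : Filter.Tendsto H Filter.atTop (nhds 0) := by
    have h1 : Filter.Tendsto (fun T : ℝ => ∑ i, ∑ j, -(c i * c j * (x i + x j)) *
        Real.log (1 + (x i + x j) * T⁻¹)) Filter.atTop (nhds 0) := by
      have h0 : (0 : ℝ) = ∑ i, ∑ j, -(c i * c j * (x i + x j)) *
          Real.log (1 + (x i + x j) * 0) := by simp
      rw [h0]
      refine tendsto_finsetSum _ fun i _ => tendsto_finsetSum _ fun j _ => ?_
      exact (((tendsto_inv_atTop_zero.const_mul _).const_add 1).log (by simp)).const_mul _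
    refine h1.congr' ?_
    filter_upwards [Filter.eventually_gt_atTop 0] with T hT
    have h2 : ∑ i, ∑ j, (c i * c j * (x i + x j)) * Real.log T = 0 := by
      simp only [← Finset.sum_mul, hlin, zero_mul]
    rw [← sub_zero (∑ i, _), ← h2, hH, ← Finset.sum_sub_distrib]
    refine Finset.sum_congr rfl fun i _ => ?_
    rw [← Finset.sum_sub_distrib]
    refine Finset.sum_congr rfl fun j _ => ?_
    have h3 : x i + x j + T = (1 + (x i + x j) * T⁻¹) * T := by
      field_simp
      ring
    have h4 : 0 < 1 + (x i + x j) * T⁻¹ := by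
      have := mul_pos (hs i j) (inv_pos.2 hT)
      linarith
    rw [h3, Real.log_mul h4.ne' hT.ne']
    ring
  have hle : H 0 ≤ 0 := by
    refine ge_of_tendsto hlim ?_
    filter_upwards [Filter.eventually_ge_atTop 0] with T hT
    exact hmono Set.self_mem_Ici hT hT
  have hH0 : H 0 = -∑ i, ∑ j, c i * c j * ((x i + x j) * Real.log (x i + x j)) := by
    simp only [hH, add_zero, neg_mul, Finset.sum_neg_distrib, mul_assoc]
  linarith

/-- The Jensen–Shannon kernel
`j(x,y) = (1/2)(x·ln(2x/(x+y)) + y·ln(2y/(x+y)))` is a negative definite kernel on the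
positive reals. -/
theorem jensen_shannon_kernel_neg_def :
    IsNegDefKernel (fun x y : {r : ℝ // 0 < r} =>
      (1 / 2) * ((x : ℝ) * Real.log (2 * (x : ℝ) / ((x : ℝ) + (y : ℝ))) +
        (y : ℝ) * Real.log (2 * (y : ℝ) / ((x : ℝ) + (y : ℝ))))) := by
  refine ⟨fun a b => ?_, fun n a c hc => ?_⟩
  · simp only [add_comm (b : ℝ) (a : ℝ)]
    ring
  · have hx : ∀ i, 0 < (a i : ℝ) := fun i => (a i).2
    have hQ := sum_sum_add_mul_log_nonneg (fun i => (a i : ℝ)) c hx hc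
    -- The part of the kernel that depends on a single variable.
    let g : Fin n → ℝ := fun i => (1 / 2) * ((a i : ℝ) * (Real.log 2 + Real.log (a i : ℝ)))
    have hL := sum_sum_left_eq_zero c g hc
    have hR := sum_sum_right_eq_zero c g hc
    refine le_of_eq_of_le (b := (∑ i, ∑ j, c i * c j * g i) + (∑ i, ∑ j, c i * c j * g j) -
      (1 / 2) * ∑ i, ∑ j, c i * c j *
        (((a i : ℝ) + (a j : ℝ)) * Real.log ((a i : ℝ) + (a j : ℝ)))) ?_ (by linarith)
    simp only [Finset.mul_sum, ← Finset.sum_add_distrib, ← Finset.sum_sub_distrib]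
    refine Finset.sum_congr rfl fun i _ => Finset.sum_congr rfl fun j _ => ?_
    have hi := hx i
    have hj := hx j
    rw [Real.log_div (by positivity) (by positivity), Real.log_div (by positivity) (by positivity),
      Real.log_mul (by norm_num) hi.ne', Real.log_mul (by norm_num) hj.ne']
    simp only [g]
    ring
end
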